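/- Let ρ_AB and τ_AB be separable density matrices on ℂ^n ⊗ ℂ^n, and suppose the linear map Ψ_{B→A}^τ : E ↦ Tr_B[(I_A ⊗ E) τ_AB] on n×n complex matrices is bijective. Then there exists δ > 0 such that for every ε with 0 < ε < δ, the set Λ_A((1−ε) ρ_AB + ε τ_AB) admits a preparation-and-measurement noncontextual model. -/

import Mathlib

open Matrix
open scoped Kronecker ComplexOrder BigOperators

noncomputable section

/-- A density matrix: positive semidefinite with trace 1. -/
def IsDensity {d : Type*} [Fintype d] [DecidableEq d] (ρ : Matrix d d ℂ) : Prop :=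
  ρ.PosSemidef ∧ ρ.trace = 1

/-- Partial trace over the second (B) factor. -/
def trB {m n : ℕ} (ρ : Matrix (Fin m × Fin n) (Fin m × Fin n) ℂ) :
    Matrix (Fin m) (Fin m) ℂ := fun i j => ∑ k, ρ (i, k) (j, k)

/-- Partial trace over the first (A) factor. -/
def trA {m n : ℕ} (ρ : Matrix (Fin m × Fin n) (Fin m × Fin n) ℂ) :
    Matrix (Fin n) (Fin n) ℂ := fun k l => ∑ i, ρ (i, k) (i, l)

/-- The set of states remotely preparable on Alice's side. -/
def LambdaA {m n : ℕ} (ρ : Matrix (Fin m × Fin n) (Fin m × Fin n) ℂ) :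
    Set (Matrix (Fin m) (Fin m) ℂ) :=
  {σ | IsDensity σ ∧ ∃ E : Matrix (Fin n) (Fin n) ℂ, E.PosSemidef ∧
    σ = trB (((1 : Matrix (Fin m) (Fin m) ℂ) ⊗ₖ E) * ρ)}

/-- The set of states remotely preparable on Bob's side. -/
def LambdaB {m n : ℕ} (ρ : Matrix (Fin m × Fin n) (Fin m × Fin n) ℂ) :
    Set (Matrix (Fin n) (Fin n) ℂ) :=
  {σ | IsDensity σ ∧ ∃ E : Matrix (Fin m) (Fin m) ℂ, E.PosSemidef ∧
    σ = trA ((E ⊗ₖ (1 : Matrix (Fin n) (Fin n) ℂ)) * ρ)}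

/-- A preparation-and-measurement noncontextual model for a set `K` of density matrices. -/
def HasNCModel {d : ℕ} (K : Set (Matrix (Fin d) (Fin d) ℂ)) : Prop :=
  ∃ (L : ℕ) (N ω : Fin L → Matrix (Fin d) (Fin d) ℂ),
    (∀ l, (N l).IsHermitian) ∧ (∀ l, IsDensity (ω l)) ∧
    (∀ ρ ∈ K, ∀ l, 0 ≤ (ρ * N l).trace) ∧
    (∀ ρ ∈ K, ∑ l, (ρ * N l).trace = 1) ∧
    (∀ ρ ∈ K, ∀ M : Matrix (Fin d) (Fin d) ℂ, M.PosSemidef → (1 - M).PosSemidef →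
      (ρ * M).trace = ∑ l, (ρ * N l).trace * (ω l * M).trace)

/-- Separability of a bipartite density matrix. -/
def Separable {m n : ℕ} (ρ : Matrix (Fin m × Fin n) (Fin m × Fin n) ℂ) : Prop :=
  ∃ (L : ℕ) (ω : Fin L → Matrix (Fin m) (Fin m) ℂ)
    (κ : Fin L → Matrix (Fin n) (Fin n) ℂ),
    (∀ l, IsDensity (ω l)) ∧ (∀ l, (κ l).PosSemidef) ∧ ρ = ∑ l, ω l ⊗ₖ κ l

/-!
If `ρ = ∑ l, ω_l ⊗ κ_l` is separable and its steering map `Ψ` is injective, then an unnormalised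
state `σ = Ψ E` determines `E`, so each response `tr (E κ_l)` is a linear functional of `σ`,
represented by a Hermitian matrix `N_l`. The separable decomposition then reads
`σ = ∑ l, tr (σ N_l) ω_l`, which is a noncontextual model.

Mixing `ρ` with `τ` makes the steering map a pencil `Ψ_τ + (1 - ε) Ψ_{ρ - τ}` with `Ψ_τ` injective.
If `Γ` is a left inverse of `Ψ_τ`, a nonzero kernel vector at parameter `t` is an eigenvector of
`Γ ∘ Ψ_{ρ - τ}` for the eigenvalue `-t⁻¹`, so injectivity fails for only finitely many `ε`.
-/

open scoped Topology in
lemma exists_gt_forall_of_finite_setOf_not {α : Type*} [LinearOrder α] [TopologicalSpace α]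
    [OrderTopology α] {a b : α} (hab : a < b) {P : α → Prop}
    (hP : {x ∈ Set.Icc a b | ¬ P x}.Finite) : ∃ c, a < c ∧ ∀ x, a < x → x < c → P x := by
  have hfinite : ∀ᶠ x in 𝓝[>] a, x ∉ {x ∈ Set.Icc a b | ¬ P x} :=
    (nhdsGT_le_nhdsNE a).trans (nhdsNE_le_cofinite a) hP.eventually_cofinite_notMem
  have hnear : ∀ᶠ x in 𝓝[>] a, P x := by
    filter_upwards [Ioc_mem_nhdsGT hab, hfinite] with x hx hmem
    exact not_not.1 fun hnot => hmem ⟨Set.Ioc_subset_Icc_self hx, hnot⟩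
  obtain ⟨c, hc, hsub⟩ := (mem_nhdsGT_iff_exists_Ioo_subset' hab).1 hnear
  exact ⟨c, hc, fun x hax hxc => hsub ⟨hax, hxc⟩⟩

lemma finite_setOf_not_injective_add_smul {K V W : Type*} [Field K] [AddCommGroup V] [Module K V]
    [FiniteDimensional K V] [AddCommGroup W] [Module K W] {A : V →ₗ[K] W}
    (hA : Function.Injective A) (B : V →ₗ[K] W) :
    {t : K | ¬ Function.Injective (A + t • B)}.Finite := by
  obtain ⟨Γ, hΓ⟩ := A.exists_leftInverse_of_injective (LinearMap.ker_eq_bot.2 hA)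
  have hinj : Function.Injective fun t : K => -t⁻¹ := neg_injective.comp inv_injective
  refine ((Module.End.finite_hasEigenvalue (Γ ∘ₗ B)).preimage hinj.injOn).subset fun t ht => ?_
  obtain ⟨v, hv, hv0⟩ : ∃ v ∈ LinearMap.ker (A + t • B), v ≠ 0 :=
    Submodule.exists_mem_ne_zero_of_ne_bot (mt LinearMap.ker_eq_bot.1 ht)
  have hker : v + t • Γ (B v) = 0 := by
    have hΓA : Γ (A v) = v := LinearMap.congr_fun hΓ v
    simpa [hΓA] using congrArg Γ (LinearMap.mem_ker.1 hv)
  have ht0 : t ≠ 0 := by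
    rintro rfl
    exact hv0 (by simpa using hker)
  have heig : Γ (B v) = -t⁻¹ • v := by
    rw [← inv_smul_smul₀ ht0 (Γ (B v)), eq_neg_of_add_eq_zero_right hker, smul_neg, neg_smul]
  exact Module.End.hasEigenvalue_of_hasEigenvector ⟨Module.End.mem_eigenspace_iff.2 heig, hv0⟩

lemma exists_trace_mul_eq {R m n : Type*} [CommSemiring R] [Fintype m] [Fintype n]
    (f : Matrix m n R →ₗ[R] R) : ∃ N : Matrix n m R, ∀ X, (X * N).trace = f X := by
  classical
  refine ⟨of fun j i => f (single i j 1), fun X => ?_⟩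
  suffices h : traceLinearMap m R R ∘ₗ mulRightLinearMap m R (of fun j i => f (single i j 1)) = f
    from LinearMap.congr_fun h X
  refine ext_linearMap R fun i j => LinearMap.ext_ring ?_
  simp [trace_single_mul]

open scoped MatrixOrder Matrix.Norms.L2Operator in
lemma trace_mul_nonneg_of_posSemidef {𝕜 n : Type*} [RCLike 𝕜] [Fintype n] {A B : Matrix n n 𝕜}
    (hA : A.PosSemidef) (hB : B.PosSemidef) : 0 ≤ (A * B).trace := by
  classical
  obtain ⟨C, rfl⟩ := CStarAlgebra.nonneg_iff_eq_star_mul_self.1 hA.nonneg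
  rw [star_eq_conjTranspose, Matrix.mul_assoc, trace_mul_comm]
  exact (hB.mul_mul_conjTranspose_same C).trace_nonneg

lemma trace_mul_conjTranspose_of_isHermitian {R n : Type*} [CommSemiring R] [StarRing R]
    [Fintype n] {A : Matrix n n R} (hA : A.IsHermitian) (B : Matrix n n R) :
    (A * Bᴴ).trace = star (A * B).trace := by
  rw [← trace_conjTranspose, conjTranspose_mul, hA.eq, trace_mul_comm]

lemma isSelfAdjoint_trace_mul {R n : Type*} [CommSemiring R] [StarRing R] [Fintype n]
    {A B : Matrix n n R} (hA : A.IsHermitian) (hB : B.IsHermitian) :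
    IsSelfAdjoint (A * B).trace := by
  rw [IsSelfAdjoint, ← trace_mul_conjTranspose_of_isHermitian hA, hB.eq]

open scoped ComplexStarModule in
lemma trace_mul_realPart {n : Type*} [Fintype n] {A : Matrix n n ℂ} (hA : A.IsHermitian)
    (B : Matrix n n ℂ) : (A * (ℜ B : Matrix n n ℂ)).trace = ℜ (A * B).trace := by
  rw [realPart_apply_coe, realPart_apply_coe, Matrix.mul_smul, trace_smul, Matrix.mul_add,
    trace_add, star_eq_conjTranspose, trace_mul_conjTranspose_of_isHermitian hA]

open scoped ComplexStarModule in
lemma exists_isHermitian_trace_map_mul_eq {m n : Type*} [Fintype m] [Fintype n]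
    {Φ : Matrix n n ℂ →ₗ[ℂ] Matrix m m ℂ} (hΦ : Function.Injective Φ)
    {κ : Matrix n n ℂ} (hκ : κ.IsHermitian) :
    ∃ N : Matrix m m ℂ, N.IsHermitian ∧
      ∀ E, E.IsHermitian → (Φ E).IsHermitian → (Φ E * N).trace = (E * κ).trace := by
  obtain ⟨Γ, hΓ⟩ := Φ.exists_leftInverse_of_injective (LinearMap.ker_eq_bot.2 hΦ)
  obtain ⟨N, hN⟩ := exists_trace_mul_eq (traceLinearMap n ℂ ℂ ∘ₗ mulRightLinearMap n ℂ κ ∘ₗ Γ)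
  refine ⟨ℜ N, (ℜ N).2, fun E hE hΦE => ?_⟩
  have hNE : (Φ E * N).trace = (E * κ).trace := by
    have hΓΦ : Γ (Φ E) = E := LinearMap.congr_fun hΓ E
    simpa [hΓΦ] using hN (Φ E)
  rw [trace_mul_realPart hΦE, hNE, (isSelfAdjoint_trace_mul hE hκ).coe_realPart]

namespace Separable

variable {m n : ℕ} {ρ τ : Matrix (Fin m × Fin n) (Fin m × Fin n) ℂ}

lemma add (hρ : Separable ρ) (hτ : Separable τ) : Separable (ρ + τ) := by
  obtain ⟨L, ω, κ, hω, hκ, rfl⟩ := hρ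
  obtain ⟨L', ω', κ', hω', hκ', rfl⟩ := hτ
  refine ⟨L + L', Fin.append ω ω', Fin.append κ κ', ?_, ?_, ?_⟩
  · simpa [Fin.forall_fin_add] using ⟨hω, hω'⟩
  · simpa [Fin.forall_fin_add] using ⟨hκ, hκ'⟩
  · simp [Fin.sum_univ_add]

lemma smul (hρ : Separable ρ) {c : ℂ} (hc : 0 ≤ c) : Separable (c • ρ) := by
  obtain ⟨L, ω, κ, hω, hκ, rfl⟩ := hρ
  exact ⟨L, ω, fun l => c • κ l, hω, fun l => (hκ l).smul hc, by
    simp [Finset.smul_sum, kronecker_smul]⟩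

end Separable

section Steering

variable {m n : ℕ}

/-- The map `Ψ_{B→A}` of the paper, sending an effect `E` of Bob to the unnormalised state that it
prepares for Alice. It is bundled as a bilinear map in the shared state and the effect. -/
def steeringMap : Matrix (Fin m × Fin n) (Fin m × Fin n) ℂ →ₗ[ℂ]
    Matrix (Fin n) (Fin n) ℂ →ₗ[ℂ] Matrix (Fin m) (Fin m) ℂ :=
  LinearMap.mk₂ ℂ (fun ρ E => trB (((1 : Matrix (Fin m) (Fin m) ℂ) ⊗ₖ E) * ρ))
    (fun ρ τ E => by ext; simp [trB, mul_add, Finset.sum_add_distrib])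
    (fun c ρ E => by ext; simp [trB, Finset.mul_sum])
    (fun ρ E F => by ext; simp [trB, kronecker_add, add_mul, Finset.sum_add_distrib])
    (fun c ρ E => by ext; simp [trB, kronecker_smul, Finset.mul_sum])

lemma trB_kronecker (A : Matrix (Fin m) (Fin m) ℂ) (B : Matrix (Fin n) (Fin n) ℂ) :
    trB (A ⊗ₖ B) = B.trace • A := by
  ext i j
  simp [trB, trace, mul_comm, Finset.mul_sum]

lemma steeringMap_kronecker (ω : Matrix (Fin m) (Fin m) ℂ) (κ E : Matrix (Fin n) (Fin n) ℂ) :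
    steeringMap (ω ⊗ₖ κ) E = (E * κ).trace • ω := by
  change trB ((1 ⊗ₖ E) * (ω ⊗ₖ κ)) = _
  rw [← mul_kronecker_mul, Matrix.one_mul, trB_kronecker]

lemma steeringMap_sum_kronecker {ι : Type*} [Fintype ι] (ω : ι → Matrix (Fin m) (Fin m) ℂ)
    (κ : ι → Matrix (Fin n) (Fin n) ℂ) (E : Matrix (Fin n) (Fin n) ℂ) :
    steeringMap (∑ l, ω l ⊗ₖ κ l) E = ∑ l, (E * κ l).trace • ω l := by
  simp only [map_sum, LinearMap.sum_apply, steeringMap_kronecker]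

lemma finite_setOf_not_injective_steeringMap_one_sub_smul_add_smul
    (ρ : Matrix (Fin m × Fin n) (Fin m × Fin n) ℂ) {τ : Matrix (Fin m × Fin n) (Fin m × Fin n) ℂ}
    (hτ : Function.Injective (steeringMap τ)) :
    {ε : ℝ | ¬ Function.Injective
      (steeringMap (((1 - ε : ℝ) : ℂ) • ρ + ((ε : ℝ) : ℂ) • τ))}.Finite := by
  have hinj : Function.Injective fun ε : ℝ => ((1 - ε : ℝ) : ℂ) :=
    Complex.ofReal_injective.comp sub_right_injective
  refine ((finite_setOf_not_injective_add_smul hτ (steeringMap (ρ - τ))).preimage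
    hinj.injOn).subset fun ε hε => ?_
  have hpencil : ((1 - ε : ℝ) : ℂ) • ρ + (ε : ℂ) • τ = τ + ((1 - ε : ℝ) : ℂ) • (ρ - τ) := by
    push_cast
    module
  change ¬ Function.Injective (steeringMap _) at hε
  rwa [hpencil, map_add, map_smul] at hε

end Steering

section NoncontextualModels

lemma hasNCModel_of_eq_sum_trace_smul {d L : ℕ} {K : Set (Matrix (Fin d) (Fin d) ℂ)}
    {N ω : Fin L → Matrix (Fin d) (Fin d) ℂ} (hN : ∀ l, (N l).IsHermitian)
    (hω : ∀ l, IsDensity (ω l)) (htrace : ∀ σ ∈ K, σ.trace = 1)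
    (hnonneg : ∀ σ ∈ K, ∀ l, 0 ≤ (σ * N l).trace)
    (hsum : ∀ σ ∈ K, σ = ∑ l, (σ * N l).trace • ω l) : HasNCModel K := by
  refine ⟨L, N, ω, hN, hω, hnonneg, fun σ hσ => ?_, fun σ hσ M _ _ => ?_⟩
  · calc ∑ l, (σ * N l).trace = (∑ l, (σ * N l).trace • ω l).trace := by
          simp [trace_sum, trace_smul, (hω _).2]
      _ = 1 := by rw [← hsum σ hσ, htrace σ hσ]
  · calc (σ * M).trace = ((∑ l, (σ * N l).trace • ω l) * M).trace := by rw [← hsum σ hσ]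
      _ = ∑ l, (σ * N l).trace * (ω l * M).trace := by
          simp [Finset.sum_mul, trace_sum, trace_smul]

variable {m n : ℕ} {ρ τ : Matrix (Fin m × Fin n) (Fin m × Fin n) ℂ}

lemma Separable.hasNCModel_lambdaA (hρ : Separable ρ)
    (hinj : Function.Injective (steeringMap ρ)) : HasNCModel (LambdaA ρ) := by
  obtain ⟨L, ω, κ, hω, hκ, hdecomp⟩ := hρ
  choose N hN hdual using fun l => exists_isHermitian_trace_map_mul_eq hinj (hκ l).isHermitian
  have hresponse : ∀ E, E.PosSemidef → IsDensity (steeringMap ρ E) →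
      ∀ l, (steeringMap ρ E * N l).trace = (E * κ l).trace :=
    fun E hE hσ l => hdual l E hE.isHermitian hσ.1.isHermitian
  refine hasNCModel_of_eq_sum_trace_smul hN hω (fun σ hσ => hσ.1.2) ?_ ?_
  · rintro _ ⟨hσ, E, hE, rfl⟩ l
    exact (trace_mul_nonneg_of_posSemidef hE (hκ l)).trans_eq (hresponse E hE hσ l).symm
  · rintro _ ⟨hσ, E, hE, rfl⟩
    calc steeringMap ρ E = ∑ l, (E * κ l).trace • ω l := by
          rw [hdecomp, steeringMap_sum_kronecker]
      _ = ∑ l, (steeringMap ρ E * N l).trace • ω l := by simp only [hresponse E hE hσ]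

theorem separable_to_robust_noncontextual_general (hρ : Separable ρ) (hτ : Separable τ)
    (hinj : Function.Injective (steeringMap τ)) :
    {ε ∈ Set.Icc (0 : ℝ) 1 |
      ¬ HasNCModel (LambdaA (((1 - ε : ℝ) : ℂ) • ρ + ((ε : ℝ) : ℂ) • τ))}.Finite := by
  refine (finite_setOf_not_injective_steeringMap_one_sub_smul_add_smul ρ hinj).subset
    fun ε hε h => hε.2 ?_
  have h1ε : (0 : ℂ) ≤ ((1 - ε : ℝ) : ℂ) := Complex.zero_le_real.2 (sub_nonneg.2 hε.1.2)
  have h0ε : (0 : ℂ) ≤ (ε : ℂ) := Complex.zero_le_real.2 hε.1.1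
  exact ((hρ.smul h1ε).add (hτ.smul h0ε)).hasNCModel_lambdaA h

end NoncontextualModels

theorem separable_to_robust_noncontextual {n : ℕ}
    (ρ τ : Matrix (Fin n × Fin n) (Fin n × Fin n) ℂ)
    (hρd : IsDensity ρ) (hρs : Separable ρ)
    (hτd : IsDensity τ) (hτs : Separable τ)
    (hbij : Function.Bijective (fun E : Matrix (Fin n) (Fin n) ℂ =>
      trB (((1 : Matrix (Fin n) (Fin n) ℂ) ⊗ₖ E) * τ))) :
    ∃ δ : ℝ, 0 < δ ∧ ∀ ε : ℝ, 0 < ε → ε < δ →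
      HasNCModel (LambdaA (((1 - ε : ℝ) : ℂ) • ρ + ((ε : ℝ) : ℂ) • τ)) := by
  exact exists_gt_forall_of_finite_setOf_not one_pos
    (separable_to_robust_noncontextual_general hρs hτs hbij.injective)
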